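/- arXiv:2510.14434 — 6 statements merged into one kernel-verified Lean document; each statement's English description precedes it below -/
import Mathlib

section
/- Let k be an algebraically closed field of characteristic 2, let m ≥ 1, and let q be a quadratic form on k^{2m} whose associated bilinear form β(x,y) = q(x+y) − q(x) − q(y) is nondegenerate. Then q is equivalent (via an invertible k-linear change of variables) to the quadratic form (x_1, x_2, …, x_{2m−1}, x_{2m}) ↦ x_1 x_2 + x_3 x_4 + ⋯ + x_{2m−1} x_{2m}. -/
/-!
The form splits off hyperbolic planes one at a time. In a space of dimension at least two over an
algebraically closed field, solving a quadratic equation on a plane gives `x ≠ 0` with `q x = 0`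
(`exists_isotropic`). By nondegeneracy `x` has a partner `y` with `β(x, y) = 1`, and replacing `y`
by `y - q(y) x` makes `y` isotropic as well (`exists_hyperbolic_pair`). The polar form remains
nondegenerate on the orthogonal complement of `x, y`, whose dimension has dropped by at most two,
so induction on `m` yields a linear map `k^(2m) → V` pulling `q` back to `∑ x_{2i} x_{2i+1}`
(`exists_hyperbolic_map`). Since the polar form of that sum is nondegenerate, such a map is
injective, hence bijective for `V = k^(2m)`.
-/

open QuadraticMap

theorem exists_isotropic {k V : Type*} [Field k] [IsAlgClosed k] [AddCommGroup V] [Module k V]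
    (q : QuadraticForm k V) (hV : 2 ≤ Module.finrank k V) : ∃ x : V, x ≠ 0 ∧ q x = 0 := by
  obtain ⟨u, hu⟩ := exists_linearIndependent_of_le_finrank hV
  by_cases h0 : q (u 0) = 0
  · exact ⟨u 0, hu.ne_zero 0, h0⟩
  -- `s` is a root of `q (s • u 0 + u 1)`, a polynomial in `s` with leading coefficient `q (u 0)`.
  · obtain ⟨s, hs⟩ := IsAlgClosed.exists_root
      (Polynomial.C (q (u 0)) * Polynomial.X ^ 2 + Polynomial.C (polar q (u 0) (u 1)) * Polynomial.X
        + Polynomial.C (q (u 1))) (by rw [Polynomial.degree_quadratic h0]; decide)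
    refine ⟨s • u 0 + u 1, fun h => ?_, ?_⟩
    · have h1 := Fintype.linearIndependent_iff.1 hu ![s, 1] (by simpa [Fin.sum_univ_two] using h) 1
      simp at h1
    · rw [QuadraticMap.map_add q, QuadraticMap.map_smul, polar_smul_left]
      simp [Polynomial.IsRoot] at hs
      simp only [smul_eq_mul]
      linear_combination hs

theorem exists_hyperbolic_pair {k V : Type*} [Field k] [IsAlgClosed k] [AddCommGroup V]
    [Module k V] (q : QuadraticForm k V) (hV : 2 ≤ Module.finrank k V)
    (hnd : ∀ x : V, (∀ y, polar q x y = 0) → x = 0) :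
    ∃ x y : V, q x = 0 ∧ q y = 0 ∧ polar q x y = 1 := by
  obtain ⟨x, hx0, hx⟩ := exists_isotropic q hV
  obtain ⟨z, hz⟩ : ∃ z, polar q x z ≠ 0 := by
    by_contra! h
    exact hx0 (hnd x h)
  obtain ⟨y, hy⟩ : ∃ y, polar q x y = 1 :=
    ⟨(polar q x z)⁻¹ • z, by rw [polar_smul_right, smul_eq_mul, inv_mul_cancel₀ hz]⟩
  have hxx : polar q x x = 0 := by rw [polar_self, hx, smul_zero]
  refine ⟨x, y + (-q y) • x, hx, ?_, ?_⟩
  · rw [QuadraticMap.map_add q, QuadraticMap.map_smul, polar_smul_right, polar_comm, hx, hy]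
    simp
  · rw [polar_add_right, polar_smul_right, hy, hxx]
    simp

theorem exists_hyperbolic_map {k : Type*} [Field k] [IsAlgClosed k] (m : ℕ) :
    ∀ {V : Type*} [AddCommGroup V] [Module k V] [FiniteDimensional k V]
      (q : QuadraticForm k V), 2 * m ≤ Module.finrank k V →
      (∀ x : V, (∀ y, polar q x y = 0) → x = 0) →
      ∃ f : (Fin (2 * m) → k) →ₗ[k] V, ∀ v : Fin (2 * m) → k,
        q (f v) = ∑ i : Fin m,
          v ⟨2 * i.val, by have := i.isLt; omega⟩ *
            v ⟨2 * i.val + 1, by have := i.isLt; omega⟩ := by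
  induction m with
  | zero => intro V _ _ _ q _ _; exact ⟨0, fun v => by simp⟩
  | succ m ih =>
    intro V _ _ _ q hV hnd
    obtain ⟨x, y, hx, hy, hxy⟩ := exists_hyperbolic_pair q (by omega) hnd
    have hxx : polar q x x = 0 := by rw [polar_self, hx, smul_zero]
    have hyy : polar q y y = 0 := by rw [polar_self, hy, smul_zero]
    have hyx : polar q y x = 1 := by rw [polar_comm, hxy]
    -- `W` is the orthogonal complement of the hyperbolic plane spanned by `x` and `y`.
    let g : V →ₗ[k] k × k := (q.polarBilin x).prod (q.polarBilin y)
    let W : Submodule k V := LinearMap.ker g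
    have hW (w : V) : w ∈ W ↔ polar q x w = 0 ∧ polar q y w = 0 := by
      simp [W, g, LinearMap.mem_ker]
    have hdim : 2 * m ≤ Module.finrank k W := by
      have h1 := g.finrank_range_add_finrank_ker
      have h2 := Submodule.finrank_le (LinearMap.range g)
      have h3 : Module.finrank k (k × k) = 2 := by simp
      change _ + Module.finrank k W = _ at h1
      omega
    obtain ⟨f, hf⟩ := ih (q.comp W.subtype) hdim (by
      rintro ⟨w, hw⟩ h
      obtain ⟨hw1, hw2⟩ := (hW w).1 hw
      refine Subtype.ext (hnd w fun v => ?_)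
      have hp : v + (-polar q y v) • x + (-polar q x v) • y ∈ W := by
        rw [hW]
        simp only [polar_add_right, polar_smul_right, hxx, hyy, hxy, hyx, smul_eq_mul]
        constructor <;> ring
      have h4 : polar q w (v + (-polar q y v) • x + (-polar q x v) • y) = 0 := h ⟨_, hp⟩
      rw [polar_add_right, polar_add_right, polar_smul_right, polar_smul_right,
        polar_comm q w x, polar_comm q w y, hw1, hw2] at h4
      simpa using h4)
    let t : Fin (2 * m) → Fin (2 * (m + 1)) := fun i => ⟨i.val + 2, by omega⟩
    refine ⟨(LinearMap.proj ⟨0, by omega⟩).smulRight x + (LinearMap.proj ⟨1, by omega⟩).smulRight y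
      + W.subtype ∘ₗ f ∘ₗ LinearMap.funLeft k k t, fun v => ?_⟩
    have hfv := hf (LinearMap.funLeft k k t v)
    obtain ⟨h5, h6⟩ := (hW _).1 (f (LinearMap.funLeft k k t v)).2
    simp only [LinearMap.add_apply, LinearMap.smulRight_apply, LinearMap.proj_apply,
      LinearMap.comp_apply, Submodule.subtype_apply]
    rw [Fin.sum_univ_succ, QuadraticMap.map_add q, QuadraticMap.map_add q, polar_add_left]
    simp only [QuadraticMap.map_smul, polar_smul_left, polar_smul_right, h5, h6, hx, hy, hxy]
    rw [QuadraticMap.comp_apply, Submodule.subtype_apply] at hfv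
    rw [hfv]
    simp [t, LinearMap.funLeft_apply, mul_add, add_right_comm, mul_comm (v 1)]

/-- The polar form of `∑ v_{2i} v_{2i+1}` is nondegenerate, in the form that a vector by which the sum
is translation invariant vanishes: pairing with a basis vector reads off the partner coordinate. -/
theorem eq_zero_of_hyperbolic_add {k : Type*} [Field k] {m : ℕ} (v : Fin (2 * m) → k)
    (h : ∀ w : Fin (2 * m) → k,
      ∑ i : Fin m, (v + w) ⟨2 * i.val, by have := i.isLt; omega⟩ *
            (v + w) ⟨2 * i.val + 1, by have := i.isLt; omega⟩ =
      ∑ i : Fin m, w ⟨2 * i.val, by have := i.isLt; omega⟩ *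
            w ⟨2 * i.val + 1, by have := i.isLt; omega⟩) : v = 0 := by
  have key : ∀ w : Fin (2 * m) → k,
      ∑ i : Fin m, (v ⟨2 * i.val, by have := i.isLt; omega⟩ *
            w ⟨2 * i.val + 1, by have := i.isLt; omega⟩ +
          w ⟨2 * i.val, by have := i.isLt; omega⟩ *
            v ⟨2 * i.val + 1, by have := i.isLt; omega⟩) = 0 := by
    intro w
    have h0 := h 0
    have hw := h w
    simp only [Pi.add_apply, Pi.zero_apply, add_zero, add_mul, mul_add, Finset.sum_add_distrib,
      mul_zero, Finset.sum_const_zero] at h0 hw ⊢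
    linear_combination hw - h0
  funext j
  obtain ⟨j, hj⟩ := j
  obtain ⟨i, rfl | rfl⟩ : ∃ i, j = 2 * i ∨ j = 2 * i + 1 := ⟨j / 2, by omega⟩
  · have := key (Pi.single ⟨2 * i + 1, by omega⟩ 1)
    rw [Finset.sum_eq_single ⟨i, by omega⟩] at this
    · simpa [Pi.single_apply] using this
    · intro b _ hb
      have hb' : b.val ≠ i := fun h => hb (Fin.ext h)
      have h2 : 2 * b.val ≠ 2 * i + 1 := by omega
      simp [hb', h2]
    · simp
  · have := key (Pi.single ⟨2 * i, by omega⟩ 1)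
    rw [Finset.sum_eq_single ⟨i, by omega⟩] at this
    · simpa [Pi.single_apply] using this
    · intro b _ hb
      have hb' : b.val ≠ i := fun h => hb (Fin.ext h)
      have h2 : 2 * b.val + 1 ≠ 2 * i := by omega
      simp [hb', h2]
    · simp


/-- Let `k` be an algebraically closed field of characteristic 2, let `m ≥ 1`, and let `q`
be a quadratic form on `k^(2m)` whose associated bilinear form
`β(x,y) = q(x+y) − q(x) − q(y)` is nondegenerate. Then `q` is equivalent (via an
invertible `k`-linear change of variables) to
`(x₁, …, x_{2m}) ↦ x₁x₂ + x₃x₄ + ⋯ + x_{2m−1}x_{2m}`. -/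
theorem stmt_2 (k : Type*) [Field k] [IsAlgClosed k] (hchar : ringChar k = 2)
    (m : ℕ) (hm : 1 ≤ m) (q : QuadraticForm k (Fin (2 * m) → k))
    (hnd : ∀ x : Fin (2 * m) → k, (∀ y, QuadraticMap.polar q x y = 0) → x = 0) :
    ∃ e : (Fin (2 * m) → k) ≃ₗ[k] (Fin (2 * m) → k),
      ∀ v : Fin (2 * m) → k,
        q (e v) = ∑ i : Fin m,
          v ⟨2 * i.val, by have := i.isLt; omega⟩ *
            v ⟨2 * i.val + 1, by have := i.isLt; omega⟩ := by
  obtain ⟨f, hf⟩ := exists_hyperbolic_map m q (by simp) hnd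
  have hinj : Function.Injective f := by
    rw [injective_iff_map_eq_zero]
    intro v hv
    refine eq_zero_of_hyperbolic_add v fun w => ?_
    rw [← hf, ← hf, map_add, hv, zero_add]
  exact ⟨LinearEquiv.ofInjectiveEndo f hinj, hf⟩
end

section
/- Let A be a noetherian local ring whose reduction A_red (the quotient of A by its nilradical) is a domain. Let Â be the completion of A with respect to its maximal ideal, and let B be the integral closure of A_red in its fraction field. Then the number of minimal primes of Â is at least the number of maximal ideals of B (as an inequality of cardinals). -/
/-!
Write `R` for the completion of `A`, `B` for the integral closure of `A_red`, and `T = B ⊗[A] R`.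
An injection from the maximal ideals of `B` to the minimal primes of `R` comes from `T`.

Since `R` is faithfully flat over `A`, every maximal ideal `M` of `B` is the contraction of some
maximal ideal `n` of `T`; choose a minimal prime `Q` of `T` below `n` and send `M` to the
contraction of `Q` to `R`.

* The contraction of `Q` is a minimal prime of `R`, and it determines `Q`. Indeed `T` is flat over
  the domain `B`, so nonzero elements of `B` avoid `Q`; every element of `T` becomes an element of
  `R` after multiplication by an element of `A` that is nonzero in `B`; and the kernel of `R → T`
  consists of nilpotents
  (`comap_includeRight_mem_minimalPrimes`, `eq_of_comap_includeRight_eq`).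
* `Q` determines `n`, hence `M`: the domain `T ⧸ Q` is integral over the complete local ring `R`,
  so it is local by lifting of idempotents
  (`eq_of_isMaximal_of_isIntegral_of_isAdicComplete`).
-/

universe u

open Polynomial IsLocalRing TensorProduct

/-! ### Integral domains over a complete local ring are local -/

theorem isAdicComplete_of_finite_free {R M : Type*} [CommRing R] [AddCommGroup M] [Module R M]
    [Module.Free R M] [Module.Finite R M] (I : Ideal R) [IsAdicComplete I R] :
    IsAdicComplete I M := by
  classical
  let ι := Module.Free.ChooseBasisIndex R M
  let e : M ≃ₗ[R] (ι → R) := (Module.Free.chooseBasis R M).equivFun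
  let E := (AdicCompletion.congr I e).trans (AdicCompletion.piEquivOfFintype I (fun _ : ι ↦ R))
  have hb : Function.Bijective (AdicCompletion.of I R) :=
    AdicCompletion.of_bijective_iff.mpr inferInstance
  have hE : ∀ x, E (AdicCompletion.of I M x) = fun i ↦ AdicCompletion.of I R (e x i) := by
    intro x
    funext i
    simp only [E, LinearEquiv.trans_apply, AdicCompletion.piEquivOfFintype_apply,
      AdicCompletion.congr_apply, AdicCompletion.map_of]
    rfl
  rw [← AdicCompletion.of_bijective_iff]
  have : Function.Bijective (E ∘ AdicCompletion.of I M) := by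
    have h : E ∘ AdicCompletion.of I M = (Pi.map fun _ ↦ AdicCompletion.of I R) ∘ e :=
      funext hE
    rw [h]
    exact (Function.Bijective.piMap fun _ ↦ hb).comp e.bijective
  exact (Function.Bijective.of_comp_iff' E.bijective _).mp this

/-- Idempotents lift along Henselian pairs: `X ^ 2 - X` has derivative `2 * X - 1`, whose square is
`1` modulo `X ^ 2 - X`, so an idempotent modulo `I` is a simple root. -/
theorem exists_idempotent_sub_mem {C : Type*} [CommRing C] (I : Ideal C) [HenselianRing C I]
    (x : C) (hx : x * (1 - x) ∈ I) : ∃ y : C, y * (1 - y) = 0 ∧ y - x ∈ I := by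
  obtain ⟨y, hy, hyx⟩ := HenselianRing.is_henselian (I := I) (X ^ 2 - X : C[X])
    (by monicity!) x (by
      have : eval x (X ^ 2 - X : C[X]) = -(x * (1 - x)) := by simp; ring
      rw [this]; exact I.neg_mem hx) (by
      have h : Ideal.Quotient.mk I (x * (1 - x)) = 0 := Ideal.Quotient.eq_zero_iff_mem.mpr hx
      refine IsUnit.of_mul_eq_one (Ideal.Quotient.mk I (2 * x - 1)) ?_
      rw [← map_mul]
      have : eval x (derivative (X ^ 2 - X : C[X])) * (2 * x - 1) = 1 - 4 * (x * (1 - x)) := by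
        simp; ring
      rw [this, map_sub, map_mul, h]; simp)
  refine ⟨y, ?_, hyx⟩
  have : y ^ 2 - y = 0 := by simpa [IsRoot] using hy
  linear_combination -this

/-- A domain integral over a complete local ring has at most one maximal ideal. For `e ∈ n` outside
`n'` with monic equation `f`, the free algebra `R[X] / (f)` is complete, hence contains an
idempotent whose image in `E` is `1` modulo `n` and `0` modulo `n'`; a domain has no such
element. Passing to `R[X] / (f)` instead of `R[e]` avoids any noetherian hypothesis on `R`. -/
theorem eq_of_isMaximal_of_isIntegral_of_isAdicComplete {R E : Type*} [CommRing R] [IsLocalRing R]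
    [IsAdicComplete (maximalIdeal R) R] [CommRing E] [IsDomain E] [Algebra R E]
    [Algebra.IsIntegral R E] (n n' : Ideal E) [hn : n.IsMaximal] [hn' : n'.IsMaximal] :
    n = n' := by
  by_contra hne
  obtain ⟨e, he, he'⟩ : ∃ e ∈ n, e ∉ n' := by
    by_contra! h
    exact hne (hn.eq_of_le hn'.ne_top h)
  obtain ⟨f, hf, hfe⟩ := Algebra.IsIntegral.isIntegral (R := R) e
  have hfb : f.map (residue R) ≠ 0 := (hf.map _).ne_zero
  -- Modulo the maximal ideal, `f = X ^ a * g` with `X ^ a` and `g` coprime. With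
  -- `u * X ^ a + v * g = 1`, the class of `v * g` is idempotent modulo `f`; it is `1` where `X`
  -- vanishes and `0` where `X` does not.
  obtain ⟨g, hfg, hg⟩ := exists_eq_pow_rootMultiplicity_mul_and_not_dvd _ hfb 0
  set a := rootMultiplicity 0 (f.map (residue R))
  rw [C_0, sub_zero] at hfg hg
  obtain ⟨u, v, huv⟩ : IsCoprime (X ^ a) g :=
    ((irreducible_X.coprime_iff_not_dvd).mpr hg).pow_left
  obtain ⟨P, hP⟩ := map_surjective _ residue_surjective (v * g)
  obtain ⟨U, hU⟩ := map_surjective _ residue_surjective (u * v)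
  have := hf.free_adjoinRoot
  have := hf.finite_adjoinRoot
  have : IsAdicComplete (maximalIdeal R) (AdjoinRoot f) := isAdicComplete_of_finite_free _
  have : IsAdicComplete ((maximalIdeal R).map (algebraMap R (AdjoinRoot f))) (AdjoinRoot f) :=
    (IsAdicComplete.map_algebraMap_iff _ _).mpr this
  obtain ⟨y, hy, hyP⟩ := exists_idempotent_sub_mem
    ((maximalIdeal R).map (algebraMap R (AdjoinRoot f))) (AdjoinRoot.mk f P) (by
      have h1 : P * (1 - P) - U * f ∈ (maximalIdeal R).map (C : R →+* R[X]) := by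
        rw [Ideal.mem_map_C_iff]
        intro i
        rw [← residue_eq_zero_iff, ← coeff_map]
        have : (P * (1 - P) - U * f).map (residue R) = 0 := by
          simp only [Polynomial.map_sub, Polynomial.map_mul, Polynomial.map_one, hP, hU, hfg]
          linear_combination -(v * g) * huv
        rw [this, coeff_zero]
      have h2 := Ideal.mem_map_of_mem (AdjoinRoot.mk f) h1
      rw [Ideal.map_map] at h2
      have h3 : AdjoinRoot.mk f (P * (1 - P) - U * f) =
          AdjoinRoot.mk f P * (1 - AdjoinRoot.mk f P) := by simp
      rw [h3] at h2
      exact h2)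
  let φ : AdjoinRoot f →ₐ[R] E := AdjoinRoot.liftAlgHom f (Algebra.ofId R E) e hfe
  have hφP : φ (AdjoinRoot.mk f P) = aeval e P := by
    simp [φ, aeval_def]; rfl
  -- Integrality forces every maximal ideal `N` of `E` to lie over `maximalIdeal R`, so evaluation
  -- at `e` modulo `N` factors through polynomials over the residue field.
  have key : ∀ N : Ideal E, N.IsMaximal → φ y - aeval e P ∈ N ∧
      ∃ ψ : ResidueField R →+* E ⧸ N, ∀ p : R[X],
        eval₂ ψ (Ideal.Quotient.mk N e) (p.map (residue R)) = Ideal.Quotient.mk N (aeval e p) := by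
    intro N hN
    have hc : N.comap (algebraMap R E) = maximalIdeal R :=
      eq_maximalIdeal (Ideal.isMaximal_comap_of_isIntegral_of_isMaximal (R := R) N)
    obtain ⟨ψ, hψ⟩ : ∃ ψ : ResidueField R →+* E ⧸ N,
        ψ.comp (residue R) = (Ideal.Quotient.mk N).comp (algebraMap R E) := by
      refine ⟨Ideal.Quotient.lift (maximalIdeal R) ((Ideal.Quotient.mk N).comp (algebraMap R E))
        fun r hr ↦ ?_, rfl⟩
      rw [← hc] at hr
      exact Ideal.Quotient.eq_zero_iff_mem.mpr hr
    refine ⟨?_, ψ, fun p ↦ ?_⟩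
    · rw [← hφP, ← map_sub]
      have h : (maximalIdeal R).map (algebraMap R (AdjoinRoot f)) ≤ N.comap φ := by
        rw [Ideal.map_le_iff_le_comap, ← hc]
        intro r hr
        rw [Ideal.mem_comap, Ideal.mem_comap, AlgHom.commutes]
        exact hr
      exact h hyP
    · rw [eval₂_map, aeval_def, hom_eval₂, hψ]
  have hfe0 : aeval e f = 0 := hfe
  obtain ⟨hyn, ψ, hψ⟩ := key n hn
  obtain ⟨hyn', ψ', hψ'⟩ := key n' hn'
  have he0 : Ideal.Quotient.mk n e = 0 := Ideal.Quotient.eq_zero_iff_mem.mpr he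
  have he0' : Ideal.Quotient.mk n' e ≠ 0 := mt Ideal.Quotient.eq_zero_iff_mem.mp he'
  have : Nontrivial (E ⧸ n) := Ideal.Quotient.nontrivial_iff.mpr hn.ne_top
  have ha : a ≠ 0 := by
    intro ha
    have h := hψ f
    rw [hfg, ha, pow_zero, one_mul, he0, hfe0, map_zero, eval₂_at_zero,
      map_eq_zero] at h
    exact hg (X_dvd_iff.mpr h)
  have hP1 : Ideal.Quotient.mk n (aeval e P) = 1 := by
    have h := congrArg (eval₂ ψ (Ideal.Quotient.mk n e)) huv
    rw [eval₂_add, ← hP, hψ, eval₂_mul, eval₂_pow, eval₂_X, he0, zero_pow ha, mul_zero, zero_add,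
      eval₂_one] at h
    exact h
  have hP0 : Ideal.Quotient.mk n' (aeval e P) = 0 := by
    have h := hψ' f
    rw [hfg, hfe0, map_zero, eval₂_mul, eval₂_pow, eval₂_X] at h
    have h' := (mul_eq_zero.mp h).resolve_left (pow_ne_zero _ he0')
    rw [← hψ', hP, eval₂_mul, h', mul_zero]
  have hφy : φ y * (1 - φ y) = 0 := by
    rw [← map_one φ, ← map_sub, ← map_mul, hy, map_zero]
  rw [← Ideal.Quotient.eq_zero_iff_mem, map_sub] at hyn hyn'
  rcases mul_eq_zero.mp hφy with h | h
  · simp [h, hP1] at hyn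
  · have : Nontrivial (E ⧸ n') := Ideal.Quotient.nontrivial_iff.mpr hn'.ne_top
    simp [← sub_eq_zero.mp h, hP0] at hyn'

/-! ### Minimal primes of `B ⊗[A] R` -/

/-- The kernel of `R → B ⊗[A] R` is generated, by flatness, by the kernel of `A → B`. -/
theorem isNilpotent_of_one_tmul_eq_zero {A B R : Type*} [CommRing A] [CommRing B] [CommRing R]
    [Algebra A B] [Algebra A R] [Module.Flat A R]
    (hker : RingHom.ker (algebraMap A B) ≤ nilradical A) {x : R}
    (hx : (1 : B) ⊗ₜ[A] x = 0) : IsNilpotent x := by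
  let k := RingHom.ker (algebraMap A B)
  let i : (A ⧸ k) →ₗ[A] B := (Ideal.kerLiftAlg (Algebra.ofId A B)).toLinearMap
  have hi : Function.Injective i := Ideal.kerLiftAlg_injective (Algebra.ofId A B)
  have h1 : (1 : A ⧸ k) ⊗ₜ[A] x = 0 := by
    apply Module.Flat.rTensor_preserves_injective_linearMap (M := R) i hi
    rw [map_zero, LinearMap.rTensor_tmul]
    have hi1 : i 1 = 1 := map_one (Ideal.kerLiftAlg (Algebra.ofId A B))
    rw [hi1, hx]
  have h2 := congrArg (quotTensorEquivQuotSMul R k) h1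
  rw [map_zero, ← map_one (Ideal.Quotient.mk k), quotTensorEquivQuotSMul_mk_tmul, one_smul,
    Submodule.Quotient.mk_eq_zero, Ideal.smul_top_eq_map, Submodule.restrictScalars_mem] at h2
  have h3 : k.map (algebraMap A R) ≤ nilradical R := by
    rw [Ideal.map_le_iff_le_comap]
    intro r hr
    exact (mem_nilradical.mp (hker hr)).map (algebraMap A R)
  exact h3 h2

section
variable {A B R : Type*} [CommRing A] [CommRing B] [CommRing R]
    [Algebra A B] [Algebra A R]

/-- If `B` consists of fractions of `A`, then `B ⊗[A] R` consists of fractions of `R`, with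
denominators coming from `A`. -/
theorem exists_smul_eq_one_tmul [IsDomain B]
    (hfrac : ∀ b : B, ∃ s : A, algebraMap A B s ≠ 0 ∧ ∃ a : A, s • b = algebraMap A B a)
    (t : B ⊗[A] R) : ∃ s : A, algebraMap A B s ≠ 0 ∧ ∃ z : R, s • t = 1 ⊗ₜ z := by
  induction t with
  | zero => exact ⟨1, by simp, 0, by simp⟩
  | tmul b r =>
    obtain ⟨s, hs, a, ha⟩ := hfrac b
    refine ⟨s, hs, a • r, ?_⟩
    rw [smul_tmul', ha, Algebra.algebraMap_eq_smul_one, smul_tmul]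
  | add t t' h h' =>
    obtain ⟨s, hs, z, hz⟩ := h
    obtain ⟨s', hs', z', hz'⟩ := h'
    refine ⟨s * s', by simpa using ⟨hs, hs'⟩, s' • z + s • z', ?_⟩
    have hcomm : s' * s = s * s' := mul_comm _ _
    rw [smul_add, tmul_add, tmul_smul, tmul_smul, ← hz, ← hz', smul_smul, smul_smul, hcomm]

/-- By flatness a nonzero `b : B` is a nonzerodivisor on `B ⊗[A] R`, whereas minimal primes consist
of zero divisors. -/
theorem algebraMap_notMem_of_mem_minimalPrimes [IsDomain B] [Module.Flat A R]
    {Q : Ideal (B ⊗[A] R)} (hQ : Q ∈ minimalPrimes (B ⊗[A] R)) {b : B} (hb : b ≠ 0) :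
    algebraMap B (B ⊗[A] R) b ∉ Q := by
  intro h
  refine notMem_nonZeroDivisors_of_mem_mem_minimalPrimes h hQ ?_
  rw [mem_nonZeroDivisors_iff_right]
  intro t ht
  have : IsSMulRegular (B ⊗[A] R) b :=
    Module.Flat.isSMulRegular_of_nonZeroDivisors (mem_nonZeroDivisors_of_ne_zero hb)
  apply this
  simpa [Algebra.smul_def, mul_comm] using ht

theorem smul_mem_iff_of_mem_minimalPrimes [IsDomain B] [Module.Flat A R] {Q : Ideal (B ⊗[A] R)}
    (hQ : Q ∈ minimalPrimes (B ⊗[A] R)) {s : A} (hs : algebraMap A B s ≠ 0) (t : B ⊗[A] R) :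
    s • t ∈ Q ↔ t ∈ Q := by
  have hp : Q.IsPrime := hQ.1.1
  rw [← algebraMap_smul B s t, Algebra.smul_def, hp.mul_mem_iff_mem_or_mem]
  exact or_iff_right (algebraMap_notMem_of_mem_minimalPrimes hQ hs)

/-- Minimal primes of `B ⊗[A] R` contract to minimal primes of `R`. Given a prime `q'` inside the
contraction of `Q`, the multiplicative set generated by the complements of `Q` and `q'` avoids `0`,
because denominators from `A` move any relation into `R`, up to nilpotents. A prime avoiding this
set lies in `Q`, so equals `Q`, and contracts into `q'`. -/
theorem comap_includeRight_mem_minimalPrimes [IsDomain B] [Module.Flat A R]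
    (hker : RingHom.ker (algebraMap A B) ≤ nilradical A)
    (hfrac : ∀ b : B, ∃ s : A, algebraMap A B s ≠ 0 ∧ ∃ a : A, s • b = algebraMap A B a)
    {Q : Ideal (B ⊗[A] R)} (hQ : Q ∈ minimalPrimes (B ⊗[A] R)) :
    Q.comap (Algebra.TensorProduct.includeRight : R →ₐ[A] B ⊗[A] R) ∈ minimalPrimes R := by
  have hp : Q.IsPrime := hQ.1.1
  refine ⟨⟨inferInstance, bot_le⟩, fun q' ⟨hq', _⟩ hle ↦ ?_⟩
  let φ : R →ₐ[A] B ⊗[A] R := Algebra.TensorProduct.includeRight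
  let S : Submonoid (B ⊗[A] R) := Q.primeCompl ⊔ q'.primeCompl.map φ
  have hS : Disjoint ((⊥ : Ideal (B ⊗[A] R)) : Set (B ⊗[A] R)) S := by
    rw [Set.disjoint_left]
    rintro _ rfl h0
    obtain ⟨y, hy, _, ⟨x, hx, rfl⟩, hyx⟩ := Submonoid.mem_sup.mp h0
    obtain ⟨s, hs, z, hz⟩ := exists_smul_eq_one_tmul hfrac y
    have hnil : IsNilpotent (z * x) := by
      refine isNilpotent_of_one_tmul_eq_zero (A := A) (B := B) hker ?_
      have : (1 : B) ⊗ₜ[A] (z * x) = (1 ⊗ₜ z) * φ x := by simp [φ]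
      rw [this, ← hz, smul_mul_assoc]
      exact (congrArg (s • ·) hyx).trans (smul_zero s)
    have hzx : z * x ∈ q' := nilradical_le_prime q' hnil
    have hzq : φ z ∈ Q := hle ((hq'.mem_or_mem hzx).resolve_right hx)
    exact hy ((smul_mem_iff_of_mem_minimalPrimes hQ hs y).mp (hz ▸ hzq))
  obtain ⟨P, hP, -, hPS⟩ := Ideal.exists_le_prime_disjoint ⊥ S hS
  have hPQ : P ≤ Q := fun t ht ↦ by
    by_contra h
    exact Set.disjoint_left.mp hPS ht (Submonoid.mem_sup_left h)
  have hQP : Q ≤ P := hQ.2 ⟨hP, bot_le⟩ hPQ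
  intro x hx
  by_contra h
  exact Set.disjoint_left.mp hPS (hQP hx) (Submonoid.mem_sup_right ⟨x, h, rfl⟩)

theorem eq_of_comap_includeRight_eq [IsDomain B] [Module.Flat A R]
    (hfrac : ∀ b : B, ∃ s : A, algebraMap A B s ≠ 0 ∧ ∃ a : A, s • b = algebraMap A B a)
    {Q Q' : Ideal (B ⊗[A] R)} (hQ : Q ∈ minimalPrimes (B ⊗[A] R))
    (hQ' : Q' ∈ minimalPrimes (B ⊗[A] R))
    (h : Q.comap (Algebra.TensorProduct.includeRight : R →ₐ[A] B ⊗[A] R) =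
      Q'.comap (Algebra.TensorProduct.includeRight : R →ₐ[A] B ⊗[A] R)) : Q = Q' := by
  ext t
  obtain ⟨s, hs, z, hz⟩ := exists_smul_eq_one_tmul hfrac t
  rw [← smul_mem_iff_of_mem_minimalPrimes hQ hs, ← smul_mem_iff_of_mem_minimalPrimes hQ' hs, hz]
  exact Ideal.ext_iff.mp h z

theorem exists_minimalPrimes_le_isMaximal_comap_eq [Module.FaithfullyFlat A R] (M : Ideal B)
    [hM : M.IsMaximal] : ∃ Q ∈ minimalPrimes (B ⊗[A] R), ∃ n : Ideal (B ⊗[A] R),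
      n.IsMaximal ∧ Q ≤ n ∧ n.comap (algebraMap B (B ⊗[A] R)) = M := by
  obtain ⟨P, hP, hPM⟩ := Ideal.exists_isPrime_liesOver_of_faithfullyFlat (B := B ⊗[A] R) M
  obtain ⟨n, hn, hPn⟩ := P.exists_le_maximal hP.ne_top
  obtain ⟨Q, hQ, hQn⟩ := Ideal.exists_minimalPrimes_le (I := ⊥) (J := n) bot_le
  refine ⟨Q, hQ, n, hn, hQn, (hM.eq_of_le (Ideal.comap_ne_top _ hn.ne_top) ?_).symm⟩
  rw [hPM.over]
  exact Ideal.comap_mono hPn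

/-- A prime of `B ⊗[A] R` lies in only one maximal ideal: the quotient by it is a domain integral
over the complete local ring `R`. -/
theorem eq_of_le_of_isMaximal [IsLocalRing R] [IsAdicComplete (maximalIdeal R) R]
    [Algebra.IsIntegral A B] {Q n n' : Ideal (B ⊗[A] R)} [Q.IsPrime] (hn : n.IsMaximal)
    (hn' : n'.IsMaximal) (h : Q ≤ n) (h' : Q ≤ n') : n = n' := by
  let : Algebra R (B ⊗[A] R) := Algebra.TensorProduct.rightAlgebra
  have : Algebra.IsIntegral R (B ⊗[A] R) := by
    have := Algebra.IsIntegral.tensorProduct A R B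
    exact Algebra.IsIntegral.of_surjective
      ({ (Algebra.TensorProduct.comm A R B).toRingHom with
          commutes' := fun r ↦ by simp; rfl } : R ⊗[A] B →ₐ[R] B ⊗[A] R)
      (Algebra.TensorProduct.comm A R B).surjective
  have key : ∀ N : Ideal (B ⊗[A] R), N.IsMaximal → Q ≤ N →
      (N.map (Ideal.Quotient.mk Q)).IsMaximal ∧
        (N.map (Ideal.Quotient.mk Q)).comap (Ideal.Quotient.mk Q) = N := by
    intro N hN hQN
    have hc : (N.map (Ideal.Quotient.mk Q)).comap (Ideal.Quotient.mk Q) = N := by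
      rw [Ideal.comap_map_of_surjective _ Ideal.Quotient.mk_surjective, ← RingHom.ker_eq_comap_bot,
        Ideal.mk_ker, sup_eq_left.mpr hQN]
    refine ⟨(Ideal.map_eq_top_or_isMaximal_of_surjective _ Ideal.Quotient.mk_surjective
      hN).resolve_left fun ht ↦ hN.ne_top ?_, hc⟩
    rw [← hc, ht, Ideal.comap_top]
  obtain ⟨h1, h2⟩ := key n hn h
  obtain ⟨h1', h2'⟩ := key n' hn' h'
  rw [← h2, ← h2', eq_of_isMaximal_of_isIntegral_of_isAdicComplete (R := R)
    (n.map (Ideal.Quotient.mk Q)) (n'.map (Ideal.Quotient.mk Q))]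

end

/-! ### Comparison of cardinals -/

theorem mk_isMaximal_le_mk_minimalPrimes {A : Type*} {B R : Type u} [CommRing A] [CommRing B]
    [IsDomain B] [CommRing R] [Algebra A B] [Algebra A R] [Module.FaithfullyFlat A R]
    [IsLocalRing R] [IsAdicComplete (maximalIdeal R) R] [Algebra.IsIntegral A B]
    (hker : RingHom.ker (algebraMap A B) ≤ nilradical A)
    (hfrac : ∀ b : B, ∃ s : A, algebraMap A B s ≠ 0 ∧ ∃ a : A, s • b = algebraMap A B a) :
    Cardinal.mk {I : Ideal B // I.IsMaximal} ≤ Cardinal.mk (minimalPrimes R) := by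
  choose Q hQ n hn hQn hnM using fun M : {I : Ideal B // I.IsMaximal} ↦
    exists_minimalPrimes_le_isMaximal_comap_eq (A := A) (R := R) M.1 (hM := M.2)
  refine Cardinal.mk_le_of_injective (f := fun M ↦
    ⟨_, comap_includeRight_mem_minimalPrimes hker hfrac (hQ M)⟩) fun M M' h ↦ ?_
  have hQQ : Q M = Q M' :=
    eq_of_comap_includeRight_eq hfrac (hQ M) (hQ M') (congrArg Subtype.val h)
  have : (Q M).IsPrime := (hQ M).1.1
  have hnn : n M = n M' :=
    eq_of_le_of_isMaximal (hn M) (hn M') (hQn M) (hQQ ▸ hQn M')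
  apply Subtype.ext
  rw [← hnM M, ← hnM M']
  exact congrArg (Ideal.comap (algebraMap B (B ⊗[A] R))) hnn

/-- Let `A` be a noetherian local ring whose reduction `A_red = A ⧸ nilradical A` is a
domain. Let `Â` be the completion of `A` with respect to its maximal ideal, and let `B`
be the integral closure of `A_red` in its fraction field. Then the number of minimal
primes of `Â` is at least the number of maximal ideals of `B` (as cardinals). -/
theorem stmt_5 (A : Type*) [CommRing A] [IsNoetherianRing A] [IsLocalRing A]
    [IsDomain (A ⧸ nilradical A)] :
    Cardinal.mk {I : Ideal (integralClosure (A ⧸ nilradical A)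
        (FractionRing (A ⧸ nilradical A))) // I.IsMaximal} ≤
      Cardinal.mk (minimalPrimes (AdicCompletion (IsLocalRing.maximalIdeal A) A)) := by
  have : Module.FaithfullyFlat A (AdicCompletion (maximalIdeal A) A) :=
    Module.FaithfullyFlat.of_flat_of_isLocalHom
  let A' := A ⧸ nilradical A
  let B := integralClosure A' (FractionRing A')
  have : Algebra.IsIntegral A A' := inferInstance
  have : Algebra.IsIntegral A' B := inferInstance
  have : IsScalarTower A A' B := inferInstance
  have : Algebra.IsIntegral A B := Algebra.IsIntegral.trans A'
  have hinj : Function.Injective (algebraMap A' B) := FaithfulSMul.algebraMap_injective _ _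
  have hmap : ∀ a : A, algebraMap A B a = algebraMap A' B (Ideal.Quotient.mk _ a) := fun a ↦
    IsScalarTower.algebraMap_apply A A' B a
  refine mk_isMaximal_le_mk_minimalPrimes (A := A) (B := B) (fun a ha ↦ ?_) fun b ↦ ?_
  · rw [RingHom.mem_ker, hmap, map_eq_zero_iff _ hinj] at ha
    exact Ideal.Quotient.eq_zero_iff_mem.mp ha
  · obtain ⟨⟨x, s⟩, hxs⟩ := IsLocalization.surj (nonZeroDivisors A') (b : FractionRing A')
    obtain ⟨a, rfl⟩ := Ideal.Quotient.mk_surjective x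
    obtain ⟨s', hs'⟩ := Ideal.Quotient.mk_surjective (s : A')
    refine ⟨s', ?_, a, ?_⟩
    · rw [hmap, hs', Ne, map_eq_zero_iff _ hinj]
      exact nonZeroDivisors.coe_ne_zero s
    · rw [Algebra.smul_def, hmap, hmap, hs']
      apply Subtype.ext
      rw [mul_comm]
      exact hxs
end

section
/- Let k be a field, let n ≥ 2, d ≥ 2, r ≥ 1 with d ≥ 2r − 1, and let p_1, …, p_r ∈ k^{n+1} be nonzero vectors that are pairwise non-proportional (i.e., they represent r distinct points of ℙ^n(k)). Let Z be the k-vector space of homogeneous polynomials f ∈ k[x_0,…,x_n] of degree d such that f(p_i) = 0 and ∂f/∂x_j(p_i) = 0 for all 1 ≤ i ≤ r and 0 ≤ j ≤ n. Then dim_k Z = C(n+d, n) − r(n+1), where C(n+d, n) is the binomial coefficient (the dimension of the space of all degree-d homogeneous polynomials in n+1 variables). -/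
/-!
Imposing a singularity at one point `q` costs at most `n + 1` linear conditions on forms of
degree `d`: by Euler's identity the numbers `f(q), ∂₀f(q), …, ∂ₙf(q)` satisfy
`∑ⱼ qⱼ ∂ⱼf(q) = d f(q)`, in every characteristic. The content of the theorem is that these
conditions, taken over all the points, are independent.

For each `i` there is a form `hᵢ` of degree `d - 1` with `hᵢ(pᵢ) ≠ 0` that is singular at every
other `pⱼ`: multiply the squares of linear forms separating `pⱼ` from `pᵢ`, and pad with a
power of a linear form not vanishing at `pᵢ`; this is where `2(r - 1) ≤ d - 1` is used
(`exists_separating_form`). Consider the linear map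
`T f = (hᵢ(pᵢ) ∂ⱼf(pᵢ) - f(pᵢ) ∂ⱼhᵢ(pᵢ))ᵢⱼ` into `k^(r(n+1))` (`singularityMap`), whose
entries are the numerators of the partial derivatives of `f / hᵢ` at `pᵢ`. By Euler's identity
for `f` and `hᵢ` its kernel on forms of degree `d` is the space of forms singular at all the
`pᵢ`. It is surjective because for linear forms `Mᵢ` it sends `∑ᵢ hᵢ Mᵢ` to the coefficients of
the `Mᵢ`, scaled by `hᵢ(pᵢ)²`. Rank–nullity concludes.
-/

open MvPolynomial

/-- The subspace of homogeneous polynomials of degree `d` in `k[x₀,…,x_n]` that are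
singular at each of the given points `p i`, i.e. vanish together with all their first
partial derivatives at each `p i`. -/
noncomputable def singularSubspace (k : Type*) [Field k] (n d r : ℕ)
    (p : Fin r → (Fin (n + 1) → k)) : Submodule k (MvPolynomial (Fin (n + 1)) k) :=
  homogeneousSubmodule (Fin (n + 1)) k d ⊓
    ⨅ (i : Fin r),
      (LinearMap.ker (aeval (R := k) (p i)).toLinearMap ⊓
        ⨅ (j : Fin (n + 1)),
          LinearMap.ker ((aeval (R := k) (p i)).toLinearMap ∘ₗ (pderiv j).toLinearMap))

theorem finrank_homogeneousSubmodule_fin (k : Type*) [Field k] (n d : ℕ) :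
    Module.finrank k (homogeneousSubmodule (Fin (n + 1)) k d) = (n + d).choose n := by
  rw [homogeneousSubmodule_eq_finsupp_supported,
    (AddMonoidAlgebra.supportedEquivFinsupp _).finrank_eq]
  have e : {x : Fin (n + 1) →₀ ℕ | x.degree = d} ≃ Sym (Fin (n + 1)) d :=
    (Equiv.subtypeEquivRight fun x => by
      simp [Finsupp.degree_apply, Finsupp.sum]).trans (Sym.equivNatSum (Fin (n + 1)) d).symm
  have : Fintype {x : Fin (n + 1) →₀ ℕ | x.degree = d} := Fintype.ofEquiv _ e.symm
  rw [Module.finrank_finsupp_self, Fintype.card_congr e, Sym.card_sym_eq_choose,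
    Fintype.card_fin, show n + 1 + d - 1 = n + d by omega,
    Nat.choose_symm_add]

theorem eval_euler {k : Type*} [Field k] {m d : ℕ} {f : MvPolynomial (Fin m) k}
    (hf : f.IsHomogeneous d) (q : Fin m → k) :
    ∑ j, q j * eval q (pderiv j f) = d * eval q f := by
  simpa using congrArg (eval q) hf.sum_X_mul_pderiv

theorem exists_linear_form_separating {k : Type*} [Field k] {m : ℕ} {p q : Fin m → k}
    (hq : q ≠ 0) (h : ∀ c : k, p ≠ c • q) :
    ∃ l : MvPolynomial (Fin m) k, l.IsHomogeneous 1 ∧ eval q l = 0 ∧ eval p l ≠ 0 := by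
  obtain ⟨a, ha⟩ := Function.ne_iff.mp hq
  -- One of the 2 × 2 minors of `(p, q)` involving the coordinate `a` is nonzero.
  obtain ⟨b, hb⟩ := Function.ne_iff.mp (h (p a / q a))
  refine ⟨C (q a) * X b - C (q b) * X a, ?_, ?_, ?_⟩
  · exact ((isHomogeneous_X k b).C_mul _).sub ((isHomogeneous_X k a).C_mul _)
  · simp [mul_comm]
  · intro h0
    apply hb
    have ha' : q a ≠ 0 := by simpa using ha
    simp only [map_sub, map_mul, eval_C, eval_X] at h0
    simp only [Pi.smul_apply, smul_eq_mul]
    field_simp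
    linear_combination h0

theorem exists_linear_form_ne_zero {k : Type*} [Field k] {m : ℕ} {p : Fin m → k}
    (hp : p ≠ 0) : ∃ l : MvPolynomial (Fin m) k, l.IsHomogeneous 1 ∧ eval p l ≠ 0 := by
  obtain ⟨a, ha⟩ := Function.ne_iff.mp hp
  exact ⟨X a, isHomogeneous_X k a, by simpa using ha⟩

/-- A form of degree `d - 1` that is singular at all the points except `p i`, where it does not
vanish. -/
theorem exists_separating_form {k : Type*} [Field k] {m d r : ℕ} (hr : 1 ≤ r)
    (hdr : 2 * r - 1 ≤ d) (p : Fin r → (Fin m → k)) (hp0 : ∀ i, p i ≠ 0)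
    (hpp : ∀ i j, i ≠ j → ∀ c : k, p j ≠ c • p i) (i : Fin r) :
    ∃ h : MvPolynomial (Fin m) k, h.IsHomogeneous (d - 1) ∧ eval (p i) h ≠ 0 ∧
      ∀ j, j ≠ i → eval (p j) h = 0 ∧ ∀ a, eval (p j) (pderiv a h) = 0 := by
  classical
  have hl : ∀ j, ∃ l : MvPolynomial (Fin m) k, l.IsHomogeneous 1 ∧
      eval (p i) l ≠ 0 ∧ (j ≠ i → eval (p j) l = 0) := by
    intro j
    by_cases hji : j = i
    · obtain ⟨l, h1, h2⟩ := exists_linear_form_ne_zero (hp0 i)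
      exact ⟨l, h1, h2, fun h => absurd hji h⟩
    · obtain ⟨l, h1, h2, h3⟩ := exists_linear_form_separating (hp0 j) (hpp j i hji)
      exact ⟨l, h1, h3, fun _ => h2⟩
  choose l hl1 hl2 hl3 using hl
  refine ⟨(∏ j ∈ Finset.univ.erase i, l j ^ 2) * l i ^ (d - (2 * r - 1)), ?_, ?_, ?_⟩
  · have h1 : (∏ j ∈ Finset.univ.erase i, l j ^ 2).IsHomogeneous
        (∑ _j ∈ Finset.univ.erase i, 1 * 2) :=
      IsHomogeneous.prod _ _ _ fun j _ => (hl1 j).pow 2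
    have h2 := h1.mul ((hl1 i).pow (d - (2 * r - 1)))
    convert h2 using 1
    simp only [Finset.sum_const, Finset.card_erase_of_mem (Finset.mem_univ i),
      Finset.card_univ, Fintype.card_fin, smul_eq_mul]
    omega
  · simp only [map_mul, map_prod, map_pow]
    exact mul_ne_zero (Finset.prod_ne_zero_iff.mpr fun j _ => pow_ne_zero _ (hl2 j))
      (pow_ne_zero _ (hl2 i))
  · intro j hj
    rw [← Finset.mul_prod_erase _ _ (Finset.mem_erase.mpr ⟨hj, Finset.mem_univ j⟩), mul_assoc]
    generalize (∏ x ∈ (Finset.univ.erase i).erase j, l x ^ 2) * l i ^ (d - (2 * r - 1)) = g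
    have h0 := hl3 j hj
    exact ⟨by simp [h0], fun a => by simp [Derivation.leibniz, Derivation.leibniz_pow, h0]⟩

/-- The linear map `f ↦ (hᵢ(pᵢ) ∂ⱼf(pᵢ) - f(pᵢ) ∂ⱼhᵢ(pᵢ))ᵢⱼ`, i.e. the numerators of the
partial derivatives of `f / hᵢ` at `pᵢ`. -/
noncomputable def singularityMap {k : Type*} [Field k] {m r : ℕ} (p : Fin r → (Fin m → k))
    (h : Fin r → MvPolynomial (Fin m) k) :
    MvPolynomial (Fin m) k →ₗ[k] (Fin r → Fin m → k) where
  toFun f i j := eval (p i) (h i) * eval (p i) (pderiv j f) -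
    eval (p i) f * eval (p i) (pderiv j (h i))
  map_add' f g := by
    ext i j
    simp only [map_add, Pi.add_apply]
    ring
  map_smul' c f := by
    ext i j
    simp only [Derivation.map_smul, smul_eval, Pi.smul_apply, smul_eq_mul, RingHom.id_apply]
    ring

theorem mem_singularSubspace_iff {k : Type*} [Field k] {n d r : ℕ}
    (p : Fin r → (Fin (n + 1) → k)) (f : MvPolynomial (Fin (n + 1)) k) :
    f ∈ singularSubspace k n d r p ↔ f.IsHomogeneous d ∧
      ∀ i, eval (p i) f = 0 ∧ ∀ j, eval (p i) (pderiv j f) = 0 := by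
  simp [singularSubspace, Submodule.mem_iInf, aeval_eq_eval]

/-- On forms of degree `d`, the kernel of `singularityMap` consists of those singular at all the
points: if `hᵢ(pᵢ) ∂ⱼf(pᵢ) = f(pᵢ) ∂ⱼhᵢ(pᵢ)` for all `j`, then Euler's identity for `f` and
`hᵢ` gives `d hᵢ(pᵢ) f(pᵢ) = (d - 1) hᵢ(pᵢ) f(pᵢ)`. -/
theorem singularityMap_eq_zero_iff {k : Type*} [Field k] {m d r : ℕ} (hd : 1 ≤ d)
    (p : Fin r → (Fin m → k)) (h : Fin r → MvPolynomial (Fin m) k)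
    (hh : ∀ i, (h i).IsHomogeneous (d - 1)) (hne : ∀ i, eval (p i) (h i) ≠ 0)
    {f : MvPolynomial (Fin m) k} (hf : f.IsHomogeneous d) :
    singularityMap p h f = 0 ↔
      ∀ i, eval (p i) f = 0 ∧ ∀ j, eval (p i) (pderiv j f) = 0 := by
  constructor
  · intro h0 i
    have hij : ∀ j, eval (p i) (h i) * eval (p i) (pderiv j f) -
        eval (p i) f * eval (p i) (pderiv j (h i)) = 0 := fun j => congrFun (congrFun h0 i) j
    have hsum : eval (p i) (h i) * ∑ j, p i j * eval (p i) (pderiv j f) -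
        eval (p i) f * ∑ j, p i j * eval (p i) (pderiv j (h i)) = 0 := by
      rw [Finset.mul_sum, Finset.mul_sum, ← Finset.sum_sub_distrib]
      exact Finset.sum_eq_zero fun j _ => by linear_combination p i j * hij j
    rw [eval_euler hf, eval_euler (hh i), Nat.cast_sub hd, Nat.cast_one] at hsum
    have hf0 : eval (p i) f = 0 :=
      (mul_eq_zero.mp (by linear_combination hsum :
        eval (p i) (h i) * eval (p i) f = 0)).resolve_left (hne i)
    refine ⟨hf0, fun j => ?_⟩
    have := hij j
    rw [hf0, zero_mul, sub_zero] at this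
    exact (mul_eq_zero.mp this).resolve_left (hne i)
  · intro h0
    ext i j
    simp [singularityMap, h0 i]

theorem exists_singularityMap_eq {k : Type*} [Field k] {m d r : ℕ} (hd : 1 ≤ d)
    (p : Fin r → (Fin m → k)) (h : Fin r → MvPolynomial (Fin m) k)
    (hh : ∀ i, (h i).IsHomogeneous (d - 1)) (hne : ∀ i, eval (p i) (h i) ≠ 0)
    (hs : ∀ i j, j ≠ i → eval (p j) (h i) = 0 ∧ ∀ a, eval (p j) (pderiv a (h i)) = 0)
    (v : Fin r → Fin m → k) :
    ∃ f : MvPolynomial (Fin m) k, f.IsHomogeneous d ∧ singularityMap p h f = v := by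
  classical
  -- The linear form at `i` has coefficients `v i a / hᵢ(pᵢ)²`, since the map scales by `hᵢ(pᵢ)²`.
  let M : Fin r → MvPolynomial (Fin m) k := fun i =>
    ∑ a, C (v i a / eval (p i) (h i) ^ 2) * X a
  have hM : ∀ i, (M i).IsHomogeneous 1 := fun i =>
    IsHomogeneous.sum _ _ _ fun a _ => (isHomogeneous_X k a).C_mul _
  have hdM : ∀ i a, pderiv a (M i) = C (v i a / eval (p i) (h i) ^ 2) := by
    intro i a
    simp [M, pderiv_X, Pi.single_apply, Derivation.leibniz]
  refine ⟨∑ i, h i * M i, IsHomogeneous.sum _ _ _ fun i _ => ?_, ?_⟩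
  · have := (hh i).mul (hM i)
    rwa [Nat.sub_add_cancel hd] at this
  · ext i a
    have hv : ∀ g, singularityMap p h g i a = eval (p i) (h i) * eval (p i) (pderiv a g) -
      eval (p i) g * eval (p i) (pderiv a (h i)) := fun _ => rfl
    rw [map_sum, Finset.sum_apply, Finset.sum_apply, Finset.sum_eq_single i]
    · have := hne i
      rw [hv, Derivation.leibniz, hdM]
      simp only [map_add, map_mul, smul_eq_mul, eval_C]
      field_simp
      ring
    · intro b _ hb
      obtain ⟨h1, h2⟩ := hs b i hb.symm
      rw [hv, Derivation.leibniz]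
      simp [h1, h2]
    · simp

/-- Let `k` be a field, let `n ≥ 2`, `d ≥ 2`, `r ≥ 1` with `d ≥ 2r − 1`, and let
`p₁, …, p_r ∈ k^(n+1)` be nonzero vectors that are pairwise non-proportional. Let `Z` be
the `k`-vector space of homogeneous polynomials `f ∈ k[x₀,…,x_n]` of degree `d` such that
`f(pᵢ) = 0` and `∂f/∂xⱼ(pᵢ) = 0` for all `i, j`. Then
`dim_k Z = C(n+d, n) − r(n+1)`. -/
theorem stmt_14 (k : Type*) [Field k] (n d r : ℕ)
    (hn : 2 ≤ n) (hd : 2 ≤ d) (hr : 1 ≤ r) (hdr : 2 * r - 1 ≤ d)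
    (p : Fin r → (Fin (n + 1) → k))
    (hp0 : ∀ i, p i ≠ 0)
    (hpp : ∀ i j, i ≠ j → ∀ c : k, p j ≠ c • p i) :
    Module.finrank k (singularSubspace k n d r p) =
      (n + d).choose n - r * (n + 1) := by
  choose h hh hne hs using exists_separating_form hr hdr p hp0 hpp
  have hd1 : 1 ≤ d := by omega
  let H := homogeneousSubmodule (Fin (n + 1)) k d
  let T : H →ₗ[k] (Fin r → Fin (n + 1) → k) := (singularityMap p h).domRestrict H
  have hfin : Module.Finite k H := Module.Finite.iff_fg.mpr (homogeneousSubmodule_fg _ k d)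
  have hker : singularSubspace k n d r p = (LinearMap.ker T).map H.subtype := by
    ext f
    rw [mem_singularSubspace_iff, Submodule.mem_map]
    constructor
    · rintro ⟨hf, h0⟩
      exact ⟨⟨f, hf⟩, (singularityMap_eq_zero_iff hd1 p h hh hne hf).mpr h0, rfl⟩
    · rintro ⟨⟨g, hg⟩, hg0, rfl⟩
      exact ⟨hg, (singularityMap_eq_zero_iff hd1 p h hh hne hg).mp hg0⟩
  have hsurj : LinearMap.range T = ⊤ := by
    rw [LinearMap.range_eq_top]
    intro v
    obtain ⟨f, hf, hfv⟩ := exists_singularityMap_eq hd1 p h hh hne hs v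
    exact ⟨⟨f, hf⟩, hfv⟩
  have hrank := T.finrank_range_add_finrank_ker
  rw [hsurj, finrank_top, finrank_homogeneousSubmodule_fin, Module.finrank_pi_fintype] at hrank
  simp only [Module.finrank_fin_fun, Finset.sum_const, Finset.card_univ, Fintype.card_fin,
    smul_eq_mul] at hrank
  rw [hker, Submodule.finrank_map_subtype_eq]
  omega
end

section
/- Let k be an algebraically closed field, let n ≥ 2, d ≥ 2, and let r ≥ 1 satisfy r ≤ (d−1)/2. Let p_1, …, p_r ∈ k^{n+1} be nonzero vectors that are pairwise non-proportional. Then there exists a homogeneous polynomial f ∈ k[x_0,…,x_n] of degree d such that for every nonzero v ∈ k^{n+1}, one has (f(v) = 0 and ∂f/∂x_j(v) = 0 for all 0 ≤ j ≤ n) if and only if v is a scalar multiple of p_i for some i; that is, the singular locus of the hypersurface f = 0 in ℙ^n consists exactly of the r points represented by p_1, …, p_r. -/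
open MvPolynomial

/-!
The forms of degree `d` considered are `f_a = ∑ₛ Hₛ · ∑ⱼ a(s,j) xⱼ`, where
`Hₛ = Lₛ² · x_{j(s)}^(d-2r-1)` and `Lₛ` is a product of `r` linear forms, the `i`-th one being a
`2 × 2` minor of the matrix with rows `x` and `pᵢ`. Each `Lₛ` vanishes at every `pᵢ`, so every `f_a`
is singular there. If `q` is not proportional to any `pᵢ`, some index `s` has `Hₛ(q) ≠ 0` and
`q_{j(s)} ≠ 0`.

It remains to show that a general `a` gives no other singular point, which is a dimension count
valid in every characteristic. Normalise `q_{j(s)} = 1`. If `Hₛ(q) ≠ 0`, the equations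
`f_a(q) = 0`, `∂ᵢ f_a(q) = 0` determine the `n + 1` numbers `a(s,·)` from `q` (which has `n` free
coordinates) and the other `a(t,·)`. So the bad parameters of the chart `s` lie in the image of a
polynomial map from an affine space of dimension one less than that of the parameter space, hence in
a hypersurface `Pₛ = 0` (`exists_hypersurface_of_chart`). A parameter with `∏ₛ Pₛ(a) ≠ 0` does the
job.
-/

namespace SingularPoints

/-- More polynomials than variables are algebraically dependent. -/
lemma exists_relation {k ι κ : Type*} [Field k] [Fintype ι] [Fintype κ]
    (h : Fintype.card κ < Fintype.card ι) (φ : ι → MvPolynomial κ k) :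
    ∃ P : MvPolynomial ι k, P ≠ 0 ∧ aeval φ P = 0 := by
  by_contra! hc
  have hind : AlgebraicIndependent k φ := by
    rw [algebraicIndependent_iff]
    intro P hP
    by_contra hne
    exact hc P hne hP
  have h1 := hind.lift_cardinalMk_le_trdeg
  rw [MvPolynomial.trdeg_of_isDomain] at h1
  simp only [Cardinal.mk_fintype, Cardinal.lift_natCast, Nat.cast_le] at h1
  omega

/-- The polynomial `∑ₜ Hₜ · ∑ⱼ a(t,j) xⱼ`. -/
noncomputable def family {k S ι : Type*} [Field k] [Fintype S] [Fintype ι]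
    (H : S → MvPolynomial ι k) (a : S × ι → k) : MvPolynomial ι k :=
  ∑ t, H t * ∑ j, C (a (t, j)) * X j

lemma eval_family {k S ι : Type*} [Field k] [Fintype S] [Fintype ι]
    (H : S → MvPolynomial ι k) (a : S × ι → k) (q : ι → k) :
    eval q (family H a) = ∑ t, eval q (H t) * ∑ j, a (t, j) * q j := by
  simp [family]

lemma eval_pderiv_family {k S ι : Type*} [Field k] [Fintype S] [Fintype ι] [DecidableEq ι]
    (H : S → MvPolynomial ι k) (a : S × ι → k) (q : ι → k) (i : ι) :
    eval q (pderiv i (family H a)) =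
      ∑ t, (eval q (pderiv i (H t)) * (∑ j, a (t, j) * q j) + eval q (H t) * a (t, i)) := by
  simp only [family, map_sum, pderiv_mul, map_add, map_mul, eval_X, eval_C, pderiv_C, zero_mul,
    zero_add, pderiv_X, Pi.single_apply]
  refine Finset.sum_congr rfl fun t _ => ?_
  congr 2
  rw [Finset.sum_eq_single i] <;> simp +contextual [eq_comm]

/-- The parameters `a` for which `family H a` has a singular point `q` in the chart `q j₀ = 1`,
`H s q ≠ 0` lie in a hypersurface of the parameter space. -/
lemma exists_hypersurface_of_chart {k S ι : Type*} [Field k] [Fintype S] [Fintype ι]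
    (H : S → MvPolynomial ι k) (s : S) (j₀ : ι) :
    ∃ P : MvPolynomial (S × ι) k, P ≠ 0 ∧ ∀ (a : S × ι → k) (q : ι → k), q j₀ = 1 →
      eval q (H s) ≠ 0 → eval q (family H a) = 0 →
      (∀ i, eval q (pderiv i (family H a)) = 0) → eval a P = 0 := by
  classical
  -- The variables other than `(s, j₀)`: those indexed `(s, i)` stand for `q i`,
  -- those indexed `(t, i)` with `t ≠ s` for `a (t, i) / (H s q) ^ 2`.
  let κ := {x : S × ι // x ≠ (s, j₀)}
  let Q : ι → MvPolynomial κ k := fun i =>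
    if h : i = j₀ then 1 else X ⟨(s, i), fun e => h (Prod.ext_iff.1 e).2⟩
  let B : S → ι → MvPolynomial κ k := fun t i =>
    if h : t = s then 0 else X ⟨(t, i), fun e => h (Prod.ext_iff.1 e).1⟩
  let R : MvPolynomial κ k := ∑ t, aeval Q (H t) * ∑ j, B t j * Q j
  let R' : ι → MvPolynomial κ k := fun i =>
    ∑ t, (aeval Q (pderiv i (H t)) * (∑ j, B t j * Q j) + aeval Q (H t) * B t i)
  let φ : S × ι → MvPolynomial κ k := fun x =>
    if x.1 = s then aeval Q (pderiv x.2 (H s)) * R - aeval Q (H s) * R' x.2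
    else aeval Q (H s) ^ 2 * B x.1 x.2
  obtain ⟨P, hP0, hP⟩ := exists_relation (κ := κ)
    (Fintype.card_subtype_lt (x := (s, j₀)) (by simp)) φ
  refine ⟨P, hP0, fun a q hq hH hf hd => ?_⟩
  set h := eval q (H s) with hh
  let y : κ → k := fun x => if x.1.1 = s then q x.1.2 else a x.1 / h ^ 2
  have hQ : ∀ i, eval y (Q i) = q i := by
    intro i
    by_cases e : i = j₀
    · simp [Q, e, hq]
    · simp [Q, e, y]
  have hQe : ∀ G : MvPolynomial ι k, eval y (aeval Q G) = eval q G := by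
    intro G
    have : ((aeval y).comp (aeval Q) : MvPolynomial ι k →ₐ[k] k) = aeval q := by
      ext i
      simpa [aeval_eq_eval] using hQ i
    simpa [aeval_eq_eval] using DFunLike.congr_fun this G
  have hB : ∀ t i, eval y (B t i) = if t = s then 0 else a (t, i) / h ^ 2 := by
    intro t i
    by_cases e : t = s
    · simp [B, e]
    · simp [B, e, y]
  -- `R` and `R'` are, up to the factor `h ^ 2`, the contributions of the indices `t ≠ s`.
  have hR : h ^ 2 * eval y R = - (h * ∑ j, a (s, j) * q j) := by
    rw [eval_family, ← Finset.add_sum_erase _ _ (Finset.mem_univ s)] at hf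
    rw [← eq_neg_iff_add_eq_zero.2 ((add_comm _ _).trans hf)]
    simp only [R, map_sum, map_mul, hQe, hQ, hB]
    rw [← Finset.add_sum_erase _ _ (Finset.mem_univ s)]
    simp only [if_true, zero_mul, Finset.sum_const_zero, mul_zero, zero_add, Finset.mul_sum]
    refine Finset.sum_congr rfl fun t ht => Finset.sum_congr rfl fun j _ => ?_
    rw [if_neg (Finset.ne_of_mem_erase ht)]
    field_simp
  have hR' : ∀ i, h ^ 2 * eval y (R' i) =
      - (eval q (pderiv i (H s)) * (∑ j, a (s, j) * q j) + h * a (s, i)) := by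
    intro i
    have hd := hd i
    rw [eval_pderiv_family, ← Finset.add_sum_erase _ _ (Finset.mem_univ s)] at hd
    rw [← eq_neg_iff_add_eq_zero.2 ((add_comm _ _).trans hd)]
    simp only [R', map_sum, map_add, map_mul, hQe, hQ, hB]
    rw [← Finset.add_sum_erase _ _ (Finset.mem_univ s)]
    simp only [if_true, zero_mul, Finset.sum_const_zero, mul_zero, zero_add, Finset.mul_sum,
      mul_add, add_zero]
    refine Finset.sum_congr rfl fun t ht => ?_
    rw [if_neg (Finset.ne_of_mem_erase ht)]
    congr 1
    · refine Finset.sum_congr rfl fun j _ => ?_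
      rw [if_neg (Finset.ne_of_mem_erase ht)]
      field_simp
    · field_simp
  have hφ : ∀ x, eval y (φ x) = a x := by
    rintro ⟨t, i⟩
    by_cases e : t = s
    · subst e
      simp only [φ, if_true, map_sub, map_mul, hQe, ← hh]
      apply mul_left_cancel₀ (pow_ne_zero 2 hH)
      linear_combination (eval q (pderiv i (H t))) * hR - h * hR' i
    · simp only [φ, e, if_false, map_mul, map_pow, hQe, hB, ← hh]
      field_simp
  have hc : ((aeval y).comp (aeval φ) : MvPolynomial (S × ι) k →ₐ[k] k) = aeval a := by
    ext x
    simpa [aeval_eq_eval] using hφ x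
  have := DFunLike.congr_fun hc P
  rw [AlgHom.comp_apply, hP, map_zero] at this
  simpa [aeval_eq_eval] using this.symm

/-- The `2 × 2` minor on columns `b.1`, `b.2` of the matrix with rows `x` and `p`. -/
noncomputable def minor {k ι : Type*} [Field k] (p : ι → k) (b : ι × ι) : MvPolynomial ι k :=
  C (p b.2) * X b.1 - C (p b.1) * X b.2

lemma eval_minor {k ι : Type*} [Field k] (p : ι → k) (b : ι × ι) (v : ι → k) :
    eval v (minor p b) = p b.2 * v b.1 - p b.1 * v b.2 := by
  simp [minor]

lemma isHomogeneous_minor {k ι : Type*} [Field k] (p : ι → k) (b : ι × ι) :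
    (minor p b).IsHomogeneous 1 := by
  have h : ∀ (c : k) (i : ι), (C c * X i : MvPolynomial ι k).IsHomogeneous 1 := fun c i => by
    simpa using (isHomogeneous_C ι c).mul (isHomogeneous_X k i)
  exact (h _ _).sub (h _ _)

lemma exists_minor_ne_zero {k ι : Type*} [Field k] {p v : ι → k} (hp : p ≠ 0)
    (h : ∀ c : k, v ≠ c • p) : ∃ b, eval v (minor p b) ≠ 0 := by
  obtain ⟨i, hi⟩ := Function.ne_iff.1 hp
  simp only [Pi.zero_apply] at hi
  by_contra! hc
  refine h (v i / p i) (funext fun j => ?_)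
  have := hc (j, i)
  rw [eval_minor] at this
  simp only [Pi.smul_apply, smul_eq_mul]
  field_simp
  linear_combination this

/-- The form `Lₛ² · x_{j(s)}^e`, where the index `s` consists of a pair of columns for each `pᵢ`
and of the coordinate `j(s) = s.2`. -/
noncomputable def chartForm {k ι : Type*} [Field k] {r : ℕ} (p : Fin r → ι → k) (e : ℕ)
    (s : (Fin r → ι × ι) × ι) : MvPolynomial ι k :=
  (∏ i, minor (p i) (s.1 i)) ^ 2 * X s.2 ^ e

lemma isHomogeneous_chartForm {k ι : Type*} [Field k] {r : ℕ} (p : Fin r → ι → k) (e : ℕ)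
    (s : (Fin r → ι × ι) × ι) : (chartForm p e s).IsHomogeneous (2 * r + e) := by
  have h1 : (∏ i, minor (p i) (s.1 i)).IsHomogeneous r := by
    simpa using IsHomogeneous.prod Finset.univ (fun i => minor (p i) (s.1 i)) (fun _ => 1)
      (fun i _ => isHomogeneous_minor _ _)
  have h2 := (h1.pow 2).mul ((isHomogeneous_X k s.2).pow e)
  have h3 : r * 2 + 1 * e = 2 * r + e := by ring
  rw [h3] at h2
  exact h2

lemma isHomogeneous_family {k S ι : Type*} [Field k] [Fintype S] [Fintype ι]
    {H : S → MvPolynomial ι k} {m : ℕ} (hH : ∀ s, (H s).IsHomogeneous m) (a : S × ι → k) :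
    (family H a).IsHomogeneous (m + 1) := by
  refine IsHomogeneous.sum _ _ _ fun t _ => (hH t).mul (IsHomogeneous.sum _ _ _ fun j _ => ?_)
  simpa using (isHomogeneous_C ι (a (t, j))).mul (isHomogeneous_X k j)

lemma eval_smul_of_isHomogeneous {k ι : Type*} [Field k] {f : MvPolynomial ι k} {m : ℕ}
    (hf : f.IsHomogeneous m) (c : k) (v : ι → k) : eval (c • v) f = c ^ m * eval v f := by
  rw [eval_eq, eval_eq, Finset.mul_sum]
  refine Finset.sum_congr rfl fun x hx => ?_
  have hdeg : ∑ i ∈ x.support, x i = m := by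
    simpa [Finsupp.weight_apply, Finsupp.sum] using hf (mem_support_iff.1 hx)
  simp only [Pi.smul_apply, smul_eq_mul, mul_pow, Finset.prod_mul_distrib,
    Finset.prod_pow_eq_pow_sum, hdeg]
  ring

end SingularPoints

open SingularPoints in
/-- Let `k` be an algebraically closed field, let `n ≥ 2`, `d ≥ 2`, and let `r ≥ 1`
satisfy `r ≤ (d−1)/2` (i.e. `2r + 1 ≤ d`). Let `p₁, …, p_r ∈ k^(n+1)` be nonzero vectors
that are pairwise non-proportional. Then there exists a homogeneous polynomial `f` of
degree `d` such that for every nonzero `v ∈ k^(n+1)`, `f` and all its partial derivatives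
vanish at `v` if and only if `v` is a scalar multiple of some `pᵢ`; that is, the singular
locus of the hypersurface `f = 0` in `ℙⁿ` consists exactly of the `r` points represented
by `p₁, …, p_r`. -/
theorem stmt_15 (k : Type*) [Field k] [IsAlgClosed k] (n d r : ℕ)
    (hn : 2 ≤ n) (hd : 2 ≤ d) (hr : 1 ≤ r) (hdr : 2 * r + 1 ≤ d)
    (p : Fin r → (Fin (n + 1) → k))
    (hp0 : ∀ i, p i ≠ 0)
    (hpp : ∀ i j, i ≠ j → ∀ c : k, p j ≠ c • p i) :
    ∃ f : MvPolynomial (Fin (n + 1)) k, f.IsHomogeneous d ∧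
      ∀ v : Fin (n + 1) → k, v ≠ 0 →
        ((eval v f = 0 ∧ ∀ j : Fin (n + 1), eval v (pderiv j f) = 0) ↔
          ∃ (i : Fin r) (c : k), v = c • p i) := by
  classical
  obtain ⟨e, rfl⟩ : ∃ e, d = 2 * r + e + 1 := ⟨d - (2 * r + 1), by omega⟩
  let H := chartForm p e
  choose P hP0 hP using fun s => exists_hypersurface_of_chart H s s.2
  have hprod : ∏ s, P s ≠ 0 := Finset.prod_ne_zero_iff.2 fun s _ => hP0 s
  have : Infinite k := IsAlgClosed.instInfinite
  obtain ⟨a, ha⟩ : ∃ a, eval a (∏ s, P s) ≠ 0 := by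
    by_contra! hc
    exact hprod (MvPolynomial.funext fun a => by simpa using hc a)
  rw [map_prod, Finset.prod_ne_zero_iff] at ha
  have hhom : (family H a).IsHomogeneous (2 * r + e + 1) :=
    isHomogeneous_family (isHomogeneous_chartForm p e) a
  refine ⟨family H a, hhom, fun v hv => ⟨?_, ?_⟩⟩
  · rintro ⟨hf, hd⟩
    by_contra! hc
    choose b hb using fun i => exists_minor_ne_zero (hp0 i) (hc i)
    obtain ⟨j, hj⟩ := Function.ne_iff.1 hv
    simp only [Pi.zero_apply] at hj
    refine ha (b, j) (Finset.mem_univ _) (hP (b, j) a ((v j)⁻¹ • v) ?_ ?_ ?_ fun i => ?_)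
    · simp [hj]
    · rw [eval_smul_of_isHomogeneous (isHomogeneous_chartForm p e (b, j))]
      refine mul_ne_zero (pow_ne_zero _ (inv_ne_zero hj)) ?_
      simp [chartForm, Finset.prod_eq_zero_iff, hj, hb]
    · rw [eval_smul_of_isHomogeneous hhom, hf, mul_zero]
    · rw [eval_smul_of_isHomogeneous hhom.pderiv, hd i, mul_zero]
  · rintro ⟨i, c, rfl⟩
    have hL : ∀ s : (Fin r → Fin (n + 1) × Fin (n + 1)) × Fin (n + 1),
        ∏ i', eval (c • p i) (minor (p i') (s.1 i')) = 0 := fun s =>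
      Finset.prod_eq_zero (Finset.mem_univ i) (by simp [eval_minor]; ring)
    have hH0 : ∀ s, eval (c • p i) (H s) = 0 := fun s => by
      simp [H, chartForm, hL]
    have hH1 : ∀ s j, eval (c • p i) (pderiv j (H s)) = 0 := fun s j => by
      simp only [H, chartForm, pderiv_mul, pderiv_pow, map_add, map_mul, map_pow, map_prod, hL]
      simp
    refine ⟨?_, fun j => ?_⟩
    · simp [eval_family, hH0]
    · simp [eval_pderiv_family, hH0, hH1]
end

section
/- Let A be a noetherian commutative ring, let B be a commutative A-algebra that is finitely generated as an A-module, and suppose the structure map A → B is injective. Let 𝔭 be a prime ideal of A such that the natural map κ(𝔭) → B ⊗_A κ(𝔭) is an isomorphism, where κ(𝔭) is the residue field of A at 𝔭. Then there exists g ∈ A ∖ 𝔭 such that the induced map of localizations A_g → B_g is an isomorphism. -/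
/-! Let `M = B / A` be the cokernel of `A → B`, a finite `A`-module. Every element of the fibre
`B ⊗ κ(𝔭)` comes from `κ(𝔭)`, so `M ⊗ κ(𝔭) = 0`; by Nakayama (in the form of
`Module.mem_support_iff_nontrivial_residueField_tensorProduct`) `𝔭` is not in the support of `M`,
hence some `g ∉ 𝔭` kills `M`, i.e. `g B ⊆ A`. Inverting this `g` makes `A → B` surjective, and
localization preserves its injectivity. -/

open TensorProduct

/-- Let `A` be a noetherian commutative ring, let `B` be a commutative `A`-algebra that
is finitely generated as an `A`-module, and suppose the structure map `A → B` is
injective. Let `𝔭` be a prime ideal of `A` such that the natural map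
`κ(𝔭) → B ⊗[A] κ(𝔭)` is an isomorphism, where `κ(𝔭)` is the residue field of `A` at
`𝔭`. Then there exists `g ∈ A ∖ 𝔭` such that the induced map of localizations
`A_g → B_g` is an isomorphism. -/
theorem stmt_17 (A : Type*) [CommRing A] [IsNoetherianRing A]
    (B : Type*) [CommRing B] [Algebra A B] [Module.Finite A B]
    (hinj : Function.Injective (algebraMap A B))
    (𝔭 : Ideal A) [𝔭.IsPrime]
    (hfib : Function.Bijective
      (Algebra.TensorProduct.includeRight :
        IsLocalRing.ResidueField (Localization.AtPrime 𝔭) →ₐ[A]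
          B ⊗[A] IsLocalRing.ResidueField (Localization.AtPrime 𝔭))) :
    ∃ g : A, g ∉ 𝔭 ∧ Function.Bijective (Localization.awayMap (algebraMap A B) g) := by
  let M := B ⧸ LinearMap.range (Algebra.linearMap A B)
  have hsub : Subsingleton (𝔭.ResidueField ⊗[A] M) := by
    refine subsingleton_of_forall_eq 0 fun z ↦ ?_
    induction z with
    | zero => rfl
    | add x y hx hy => rw [hx, hy, add_zero]
    | tmul k m =>
      obtain ⟨b, rfl⟩ := Submodule.mkQ_surjective _ m
      obtain ⟨l, hl⟩ := hfib.2 (b ⊗ₜ[A] k)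
      -- `b ⊗ k = 1 ⊗ l` in the fibre, and `1` dies in `M`.
      have h := congrArg (fun t ↦ TensorProduct.comm A _ _
        (LinearMap.rTensor _ (LinearMap.range (Algebra.linearMap A B)).mkQ t)) hl
      have h1 : (LinearMap.range (Algebra.linearMap A B)).mkQ 1 = 0 := by
        rw [Submodule.mkQ_apply, Submodule.Quotient.mk_eq_zero]
        exact ⟨1, by simp⟩
      simp only [Algebra.TensorProduct.includeRight_apply, LinearMap.rTensor_tmul,
        TensorProduct.comm_tmul, h1, TensorProduct.tmul_zero] at h
      exact h.symm
  have hann : ¬ Module.annihilator A M ≤ 𝔭 := by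
    intro hle
    have hmem := (Module.mem_support_iff_of_finite (p := ⟨𝔭, inferInstance⟩)).2 hle
    rw [Module.mem_support_iff_nontrivial_residueField_tensorProduct] at hmem
    exact not_subsingleton _ hsub
  obtain ⟨g, hgM, hg⟩ := Set.not_subset.1 hann
  refine ⟨g, hg, ?_, ?_⟩
  · rw [injective_iff_map_eq_zero]
    intro x hx
    obtain ⟨a, ⟨_, n, rfl⟩, rfl⟩ := IsLocalization.exists_mk'_eq (Submonoid.powers g) x
    rw [Localization.awayMap, IsLocalization.Away.map, IsLocalization.map_mk',
      IsLocalization.mk'_eq_zero_iff] at hx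
    obtain ⟨⟨_, m, rfl⟩, hm⟩ := hx
    rw [IsLocalization.mk'_eq_zero_iff]
    refine ⟨⟨_, m, rfl⟩, hinj ?_⟩
    simpa using hm
  · intro y
    obtain ⟨b, ⟨_, n, rfl⟩, rfl⟩ :=
      IsLocalization.exists_mk'_eq (Submonoid.powers (algebraMap A B g)) y
    have hgb : g • (LinearMap.range (Algebra.linearMap A B)).mkQ b = 0 :=
      Module.mem_annihilator.1 hgM _
    rw [← map_smul, Submodule.mkQ_apply, Submodule.Quotient.mk_eq_zero] at hgb
    obtain ⟨a, ha⟩ := hgb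
    -- `b / gⁿ = (g b) / gⁿ⁺¹`, and `g b` comes from `a`.
    refine ⟨IsLocalization.mk' _ a (⟨_, n + 1, rfl⟩ : Submonoid.powers g), ?_⟩
    rw [Localization.awayMap, IsLocalization.Away.map, IsLocalization.map_mk',
      IsLocalization.mk'_eq_iff_eq]
    congr 1
    rw [Algebra.linearMap_apply, Algebra.smul_def] at ha
    simp only [ha, map_pow]
    ring
end

section
/- Let k be an algebraically closed field, let n ≥ 3 and d ≥ 2, let c_1, …, c_{d−1} be distinct elements of k, and let g ∈ k[x_3,…,x_n] be homogeneous of degree d such that the only common zero in k^{n−2} of g and all its partial derivatives ∂g/∂x_j (3 ≤ j ≤ n) is the zero vector. Let h = x_2 · ∏_{i=1}^{d−1} (x_1 − c_i x_0) + g(x_3,…,x_n) ∈ k[x_0,…,x_n]. Then: (1) every nonzero vector v ∈ k^{n+1} satisfying h(v) = 0 and ∂h/∂x_j(v) = 0 for all 0 ≤ j ≤ n is a scalar multiple of (0,0,1,0,…,0) or of (1,c_i,0,…,0) for some 1 ≤ i ≤ d−1; and (2) for each 1 ≤ i ≤ d−1, the vector (1,c_i,0,…,0) satisfies h = 0 and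 ∂h/∂x_j = 0 for all j. In particular, the singular locus of the hypersurface h = 0 in ℙ^n is finite and contains the d−1 points (1 : c_i : 0 : ⋯ : 0) on the line x_2 = x_3 = ⋯ = x_n = 0. -/
/-!
Write `F = ∏ (x₁ − cᵢ x₀)`, so `h = x₂ F + g`. At a singular point `v` the partial `∂h/∂x₂ = F`
vanishes, hence so do `g` and all `∂g/∂xⱼ` with `j ≥ 3`; smoothness of `g` gives `vⱼ = 0` for
`j ≥ 3`. Moreover `v₁ = cᵢ v₀` for some `i`. If `v₂ = 0`, then `v = v₀ • (1, cᵢ, 0, …, 0)`.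
If `v₂ ≠ 0`, then `∂h/∂x₁ = v₂ ∏_{l ≠ i} (v₁ − c_l v₀)` vanishes, so `v₁ = c_l v₀` for a second
index `l`; as `c` is injective, `v₀ = v₁ = 0` and `v = v₂ • e₂`.

Conversely, at `(1, cᵢ, 0, …, 0)` both `x₂` and `F` vanish, which kills `x₂ F` to second order, and
`g` and its partials vanish because they are homogeneous of positive degree in variables that are
all zero there (`eval_eq_zero_of_isHomogeneous`).
-/

open MvPolynomial

lemma vars_pderiv_subset {σ R : Type*} [CommSemiring R] (j : σ) (p : MvPolynomial σ R) :
    (pderiv j p).vars ⊆ p.vars := by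
  intro l hl
  rw [mem_vars_iff_mem_support] at hl ⊢
  obtain ⟨m, hm, hml⟩ := hl
  refine ⟨m + Finsupp.single j 1, ?_, ?_⟩
  · rw [mem_support_iff, coeff_pderiv] at hm
    exact mem_support_iff.2 (left_ne_zero_of_mul hm)
  · simp only [Finsupp.mem_support_iff, Finsupp.add_apply] at hml ⊢
    omega

lemma eval_eq_zero_of_isHomogeneous {σ R : Type*} [CommSemiring R] {p : MvPolynomial σ R} {e : ℕ}
    (hp : p.IsHomogeneous e) (he : e ≠ 0) {w : σ → R} (hw : ∀ j ∈ p.vars, w j = 0) :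
    eval w p = 0 := by
  have h0 : eval w p = eval 0 p :=
    eval₂Hom_congr' rfl (fun i hi _ => by simpa using hw i hi) rfl
  rw [h0, eval_zero, constantCoeff_eq]
  exact hp.coeff_eq_zero (by simpa using he.symm)

/-- Let `k` be an algebraically closed field, let `n ≥ 3` and `d ≥ 2`, let
`c₁, …, c_{d−1}` be distinct elements of `k`, and let `g ∈ k[x₃,…,x_n]` be homogeneous of
degree `d` such that the only common zero in `k^(n−2)` of `g` and all its partial
derivatives `∂g/∂xⱼ` (`3 ≤ j ≤ n`) is the zero vector. Let
`h = x₂ · ∏ᵢ (x₁ − cᵢ x₀) + g(x₃,…,x_n)`. Then: (1) every nonzero `v ∈ k^(n+1)` at which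
`h` and all its partial derivatives vanish is a scalar multiple of `(0,0,1,0,…,0)` or of
`(1,cᵢ,0,…,0)` for some `i`; and (2) for each `i`, the vector `(1,cᵢ,0,…,0)` is such a
common zero of `h` and all its partial derivatives. -/
theorem stmt_18 (k : Type*) [Field k] [IsAlgClosed k] (n d : ℕ)
    (hn : 3 ≤ n) (hd : 2 ≤ d)
    (c : Fin (d - 1) → k) (hc : Function.Injective c)
    (g : MvPolynomial (Fin (n + 1)) k)
    (hg : g.IsHomogeneous d)
    (hgvars : ∀ j : Fin (n + 1), (j : ℕ) < 3 → j ∉ g.vars)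
    (hgsmooth : ∀ w : Fin (n + 1) → k,
      (eval w g = 0 ∧ ∀ j : Fin (n + 1), 3 ≤ (j : ℕ) → eval w (pderiv j g) = 0) →
        ∀ j : Fin (n + 1), 3 ≤ (j : ℕ) → w j = 0)
    (h : MvPolynomial (Fin (n + 1)) k)
    (hh : h = X (⟨2, by omega⟩ : Fin (n + 1)) *
        (∏ i : Fin (d - 1),
          (X (⟨1, by omega⟩ : Fin (n + 1)) - C (c i) * X (⟨0, by omega⟩ : Fin (n + 1))))
      + g)
    (e₂ : Fin (n + 1) → k) (he₂ : e₂ = fun j : Fin (n + 1) => if (j : ℕ) = 2 then (1 : k) else 0)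
    (pt : Fin (d - 1) → (Fin (n + 1) → k))
    (hpt : pt = fun (i : Fin (d - 1)) (j : Fin (n + 1)) =>
      if (j : ℕ) = 0 then (1 : k) else if (j : ℕ) = 1 then c i else 0) :
    (∀ v : Fin (n + 1) → k, v ≠ 0 →
      (eval v h = 0 ∧ ∀ j : Fin (n + 1), eval v (pderiv j h) = 0) →
      (∃ s : k, v = s • e₂) ∨ ∃ (i : Fin (d - 1)) (s : k), v = s • pt i) ∧
    (∀ i : Fin (d - 1),
      eval (pt i) h = 0 ∧ ∀ j : Fin (n + 1), eval (pt i) (pderiv j h) = 0) := by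
  subst hh he₂ hpt
  -- The partials of `x₂ F + g` at a zero of `F`.
  have hder : ∀ (F : MvPolynomial (Fin (n + 1)) k) (v : Fin (n + 1) → k) (j : Fin (n + 1)),
      eval v F = 0 → eval v (pderiv j (X (⟨2, by omega⟩ : Fin (n + 1)) * F + g)) =
        v ⟨2, by omega⟩ * eval v (pderiv j F) + eval v (pderiv j g) := by
    intro F v j hF
    simp [hF]
  have hg0 : ∀ j : Fin (n + 1), (j : ℕ) < 3 → pderiv j g = 0 := fun j hj =>
    pderiv_eq_zero_of_notMem_vars (hgvars j hj)
  refine ⟨?_, ?_⟩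
  · rintro v - ⟨hv, hdv⟩
    -- `F` involves only `x₀` and `x₁`.
    have hFx : ∀ j : Fin (n + 1), 2 ≤ (j : ℕ) → pderiv j (∏ i : Fin (d - 1),
        (X (⟨1, by omega⟩ : Fin (n + 1)) - C (c i) * X (⟨0, by omega⟩ : Fin (n + 1)))) = 0 := by
      intro j hj
      refine Finset.prod_induction _ (fun p => pderiv j p = 0)
        (fun p q hp hq => by rw [pderiv_mul, hp, hq]; simp) pderiv_one fun i _ => ?_
      rw [map_sub, pderiv_C_mul, pderiv_X_of_ne (by rintro rfl; simp at hj),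
        pderiv_X_of_ne (by rintro rfl; simp at hj)]
      simp
    have hF : eval v (∏ i : Fin (d - 1), (X (⟨1, by omega⟩ : Fin (n + 1)) -
        C (c i) * X (⟨0, by omega⟩ : Fin (n + 1)))) = 0 := by
      have h2 := hdv ⟨2, by omega⟩
      rw [map_add, pderiv_mul, hFx _ (by simp), hg0 _ (by simp), pderiv_X_self] at h2
      simpa only [one_mul, mul_zero, add_zero] using h2
    obtain ⟨i, hi⟩ : ∃ i, v ⟨1, by omega⟩ - c i * v ⟨0, by omega⟩ = 0 := by
      rw [eval_prod, Finset.prod_eq_zero_iff] at hF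
      obtain ⟨i, -, hi⟩ := hF
      exact ⟨i, by simpa using hi⟩
    have hi' := sub_eq_zero.1 hi
    have hgv : eval v g = 0 := by
      rw [map_add, map_mul, hF] at hv
      simpa using hv
    have hv3 : ∀ j : Fin (n + 1), 3 ≤ (j : ℕ) → v j = 0 := by
      refine hgsmooth v ⟨hgv, fun j hj => ?_⟩
      have := hdv j
      rw [hder _ _ _ hF, hFx j (by omega)] at this
      simpa using this
    by_cases hv2 : v ⟨2, by omega⟩ = 0
    · refine Or.inr ⟨i, v ⟨0, by omega⟩, funext fun j => ?_⟩
      obtain ⟨_ | _ | _ | j, hj⟩ := j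
      · simp
      · simp [hi', mul_comm]
      · simpa using hv2
      · simpa using hv3 ⟨j + 3, hj⟩ (by simp)
    · left
      have h1 := hdv ⟨1, by omega⟩
      rw [hder _ _ _ hF, hg0 _ (by simp), ← Finset.mul_prod_erase _ _ (Finset.mem_univ i),
        pderiv_mul] at h1
      have hx : pderiv (⟨1, by omega⟩ : Fin (n + 1)) (X (⟨1, by omega⟩ : Fin (n + 1)) -
          C (c i) * X (⟨0, by omega⟩ : Fin (n + 1))) = 1 := by
        rw [map_sub, pderiv_C_mul, pderiv_X_self, pderiv_X_of_ne (by simp)]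
        simp
      rw [hx] at h1
      -- The factor with index `i` vanishes at `v`, so only its derivative contributes.
      simp only [one_mul, map_add, map_mul, map_sub, eval_X, eval_C, hi, zero_mul, add_zero,
        map_zero, mul_eq_zero, hv2, false_or, eval_prod, Finset.prod_eq_zero_iff,
        Finset.mem_erase, Finset.mem_univ, and_true] at h1
      obtain ⟨l, hl, hl0⟩ := h1
      have hv0 : v ⟨0, by omega⟩ = 0 := by
        have : (c i - c l) * v ⟨0, by omega⟩ = 0 := by
          rw [← hl0, hi']; ring
        exact (mul_eq_zero.1 this).resolve_left (sub_ne_zero.2 fun h => hl (hc h).symm)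
      refine ⟨v ⟨2, by omega⟩, funext fun j => ?_⟩
      obtain ⟨_ | _ | _ | j, hj⟩ := j
      · simpa using hv0
      · rw [hv0, mul_zero] at hi'
        simpa using hi'
      · simp
      · simpa using hv3 ⟨j + 3, hj⟩ (by simp)
  · intro i
    beta_reduce
    set w : Fin (n + 1) → k := fun j =>
      if (j : ℕ) = 0 then (1 : k) else if (j : ℕ) = 1 then c i else 0 with hw
    have hF : eval w (∏ i : Fin (d - 1), (X (⟨1, by omega⟩ : Fin (n + 1)) -
        C (c i) * X (⟨0, by omega⟩ : Fin (n + 1)))) = 0 := by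
      rw [eval_prod]
      exact Finset.prod_eq_zero (Finset.mem_univ i) (by simp [hw])
    have hwg : ∀ j ∈ g.vars, w j = 0 := by
      intro j hj
      have : ¬ (j : ℕ) < 3 := fun h => hgvars j h hj
      simp only [hw]
      rw [if_neg (by omega), if_neg (by omega)]
    refine ⟨?_, fun j => ?_⟩
    · rw [map_add, map_mul, hF, eval_eq_zero_of_isHomogeneous hg (by omega) hwg]
      simp
    · rw [hder _ _ _ hF, eval_eq_zero_of_isHomogeneous (hg.pderiv (i := j)) (by omega)
        fun l hl => hwg l (vars_pderiv_subset j g hl)]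
      simp [hw]
end
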